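/- arXiv:0904.2407 — 2 statements merged into one kernel-verified Lean document; each statement's English description precedes it below -/
import Mathlib

section
/- For every w in B_n, the sum over all w-admissible subsequences T of Phi of t^{(l(w) + l(wT) - |T|)/2} (1-t)^{|T|} equals t^{l_+(w)} in Z[t]. -/
/-!
The identity is proved in a refined form, by induction along the suffixes `Γ` of `Φ`
(`admSum_suffix`): the sum over the `w`-admissible subsequences of `Γ` is `t ^ e`, where `e` is
`ℓ₊(w)` plus the number of `ℓ₋`-inversions `(k, l)` of `w` with `(k, -l)` not in `Γ`. For empty `Γ`
this is `t ^ ℓ(w)`, and for `Γ = Φ` it is the theorem.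

For the step, let `r = (i, -j)` be the first reflection of the suffix `r :: Γ`. An admissible
subsequence either avoids `r` or starts with it, so the sum `S` satisfies
`S_{r::Γ}(w) = S_Γ(w) + t ^ d (1 - t) S_Γ(wr)` if `ℓ(w) = ℓ(wr) + 2 d + 1`, and
`S_{r::Γ}(w) = S_Γ(w)` if `r` does not decrease the length (`admSum_cons_of_lt`,
`admSum_cons_of_not`). If `(i, j)` is not an `ℓ₋`-inversion of `w`, the second case applies and the
exponent is unchanged. If it is, the point is that passing from `w` to `wr` decreases
`ℓ₊` plus the inversions before `r` by exactly as much, `d`, as the inversions after `r`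
(`sum_len_sub_late`), and `d ≥ 0` (`sum_late_nonneg`). With `A` the exponent claimed for `r :: Γ`,
the recursion then reads `t ^ (A + 1) + (1 - t) t ^ A = t ^ A`.

The comparison of lengths is done pointwise: a position `k ≠ i, j` interacts with the positions
`i, j` only, and the identity holds for each `k` separately. To make this a matter of signs of
sums and differences of integers, the entries of `w` are relabelled by `key`, which turns `≺` into
the usual order and commutes with negation; `ℓ₊` then counts the pairs with `x k - x l > 0` and
`ℓ₋` those with `x k + x l > 0`.
-/

open scoped BigOperators

namespace HL

/-! ### The order `≺` on nonzero integers in `[-n,n]`: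
`1 ≺ 2 ≺ ... ≺ n ≺ -n ≺ -(n-1) ≺ ... ≺ -1`. -/

def slt (a b : ℤ) : Prop :=
  (0 < a ∧ b < 0) ∨ (0 < a ∧ 0 < b ∧ a < b) ∨ (a < 0 ∧ b < 0 ∧ a < b)

instance slt.dec (a b : ℤ) : Decidable (slt a b) := by unfold slt; infer_instance

def sle (a b : ℤ) : Prop := slt a b ∨ a = b

instance sle.dec (a b : ℤ) : Decidable (sle a b) := by unfold sle; infer_instance

/-! ### Signed permutations (windows), reflections acting on the right -/

/-- The right action of a reflection on a window (or column), with 1-based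
positions.  The reflection `(i, j)` with `j > 0` transposes positions `i` and
`j`; the reflection `(i, -j)` (i.e. `(i,\bar\jmath)`) with `i ≠ j` transposes
positions `i, j` and negates both entries; `(i, -i)` negates position `i`. -/
def applyRefl (l : List ℤ) (t : ℕ × ℤ) : List ℤ :=
  if 0 < t.2 then
    (l.set (t.1 - 1) (l.getD (t.2.toNat - 1) 0)).set (t.2.toNat - 1) (l.getD (t.1 - 1) 0)
  else
    if t.1 = (-t.2).toNat then l.set (t.1 - 1) (-(l.getD (t.1 - 1) 0))
    else (l.set (t.1 - 1) (-(l.getD ((-t.2).toNat - 1) 0))).set ((-t.2).toNat - 1)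
          (-(l.getD (t.1 - 1) 0))

def applyAll (w : List ℤ) (T : List (ℕ × ℤ)) : List ℤ := T.foldl applyRefl w

/-- The word `w[i,j] = w(i) w(i+1) ... w(j)`, 1-based and inclusive. -/
def word (l : List ℤ) (i j : ℕ) : List ℤ := (l.drop (i - 1)).take (j + 1 - i)

/-- `N_{ab}(u)` = number of letters `c` of the word `u` with `a ≺ c ≺ b`. -/
def Nab (a b : ℤ) (u : List ℤ) : ℕ :=
  (u.filter (fun c => decide (slt a c ∧ slt c b))).length

/-- `ℓ₊(w) = #{(k,l) : k < l, w(k) ≻ w(l)}`. -/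
def lplus (l : List ℤ) : ℕ :=
  (((Finset.range l.length) ×ˢ (Finset.range l.length)).filter
    (fun p => p.1 < p.2 ∧ slt (l.getD p.2 0) (l.getD p.1 0))).card

/-- `ℓ₋(w) = #{(k,l) : k ≤ l, w(k) ≻ -w(l)}`. -/
def lminus (l : List ℤ) : ℕ :=
  (((Finset.range l.length) ×ˢ (Finset.range l.length)).filter
    (fun p => p.1 ≤ p.2 ∧ slt (-(l.getD p.2 0)) (l.getD p.1 0))).card

/-- The Coxeter length of a signed permutation given by its window. -/
def len (l : List ℤ) : ℕ := lplus l + lminus l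

/-- The (finite) set of windows of all signed permutations in `B_n`. -/
def allWindows (n : ℕ) : Finset (List ℤ) :=
  Finset.image (fun w : Equiv.Perm (Fin n) × (Fin n → Bool) =>
    (List.finRange n).map (fun i =>
      if w.2 i then -(((w.1 i : ℕ) : ℤ) + 1) else ((w.1 i : ℕ) : ℤ) + 1)) Finset.univ

/-- `w`-admissibility of a sequence of reflections: a strictly decreasing
chain in Bruhat order (recorded via the length function). -/
def decChain : List ℤ → List (ℕ × ℤ) → Bool
  | _, [] => true
  | w, t :: ts => (decide (len (applyRefl w t) < len w)) && decChain (applyRefl w t) ts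

/-- Increasing-admissibility: a strictly increasing chain. -/
def incChain : List ℤ → List (ℕ × ℤ) → Bool
  | _, [] => true
  | w, t :: ts => (decide (len w < len (applyRefl w t))) && incChain (applyRefl w t) ts

/-- The subsequence of a chain `Γ` selected by a set `J` of (0-based) positions. -/
def selChain (Γ : List (ℕ × ℤ)) (J : Finset ℕ) : List (ℕ × ℤ) :=
  (J.sort (· ≤ ·)).map (fun j => Γ.getD j (0, 0))

/-! ### The `λ`-chain of type `C_n` -/

/-- `Γ'_j = ((1,-j),(2,-j),...,(j-1,-j))`. -/
def gammaPrime (j : ℕ) : List (ℕ × ℤ) := (List.range (j - 1)).map (fun r => (r + 1, -(j : ℤ)))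

/-- `Γ_j(k) = ((1,-j),...,(j-1,-j),(j,-(k+1)),...,(j,-n),(j,-j),(j,n),...,(j,k+1))`. -/
def gammaJK (n j k : ℕ) : List (ℕ × ℤ) :=
  gammaPrime j
    ++ (List.range (n - k)).map (fun r => (j, -((k + 1 + r : ℕ) : ℤ)))
    ++ [(j, -(j : ℤ))]
    ++ (List.range (n - k)).map (fun r => (j, ((n - r : ℕ) : ℤ)))

/-- `Γ(k) = Γ'_2 ⋯ Γ'_k Γ_1(k) ⋯ Γ_k(k)` (type `C_n`). -/
def gammaChain (n k : ℕ) : List (ℕ × ℤ) :=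
  ((List.range (k - 1)).map (fun r => gammaPrime (r + 2))).flatten
    ++ ((List.range k).map (fun r => gammaJK n (r + 1) k)).flatten

/-- `λ'_i = #{j : λ_j ≥ i}`, the conjugate partition. -/
def conj (n : ℕ) (lam : Fin n → ℕ) (i : ℕ) : ℕ :=
  (Finset.univ.filter (fun j : Fin n => i ≤ lam j)).card

/-- `λ_1`, the largest part. -/
def lamOne (n : ℕ) (lam : Fin n → ℕ) : ℕ := Finset.univ.sup lam

/-- The fixed `λ`-chain `Γ = Γ^{λ_1} Γ^{λ_1-1} ⋯ Γ^1` with `Γ^i = Γ(λ'_i)`. -/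
def lambdaChain (n : ℕ) (lam : Fin n → ℕ) : List (ℕ × ℤ) :=
  ((List.range (lamOne n lam)).map
    (fun r => gammaChain n (conj n lam (lamOne n lam - r)))).flatten

/-- The set `A(λ)` of admissible pairs `(w, J)`. -/
def ASet (n : ℕ) (lam : Fin n → ℕ) : Set (List ℤ × Finset ℕ) :=
  {p | p.1 ∈ allWindows n ∧ p.2 ⊆ Finset.range (lambdaChain n lam).length ∧
    decChain p.1 (selChain (lambdaChain n lam) p.2) = true}

/-! ### Roots, coroots, affine reflections, and the weight `μ(T)` -/

/-- The root of type `C_n` corresponding to a symbol: `(i,j) ↦ ε_i - ε_j`,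
`(i,-j) ↦ ε_i + ε_j` for `i < j`, and `(i,-i) ↦ 2ε_i`. -/
def rootVec (n : ℕ) (β : ℕ × ℤ) : Fin n → ℤ := fun r =>
  (if ((r : ℕ) + 1 : ℤ) = (β.1 : ℤ) then 1 else 0) +
  (if 0 < β.2 then (if ((r : ℕ) + 1 : ℤ) = β.2 then -1 else 0)
   else (if ((r : ℕ) + 1 : ℤ) = -β.2 then 1 else 0))

/-- The coroot (type `C_n`): `(2ε_i)^∨ = ε_i`, the long rootss are unchanged. -/
def corootVec (n : ℕ) (β : ℕ × ℤ) : Fin n → ℤ :=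
  if β.2 = -(β.1 : ℤ) then (fun r => if ((r : ℕ) + 1 : ℤ) = (β.1 : ℤ) then 1 else 0)
  else rootVec n β

/-- Standard inner product on `ℤ^n`. -/
def ip (n : ℕ) (u v : Fin n → ℤ) : ℤ := ∑ r, u r * v r

/-- The affine reflection in the hyperplane `{v : ⟨v, β^∨⟩ = c}`. -/
def affRefl (n : ℕ) (β : ℕ × ℤ) (c : ℤ) (v : Fin n → ℤ) : Fin n → ℤ :=
  fun r => v r - (ip n v (corootVec n β) - c) * rootVec n β r

/-- `l_k = #{j ≤ k : β_j = β_k}` (here `k` is 0-based). -/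
def lCount (Γ : List (ℕ × ℤ)) (k : ℕ) : ℕ := (Γ.take (k + 1)).count (Γ.getD k (0, 0))

/-- `μ(J) = \hat r_{j_1} ⋯ \hat r_{j_s}(λ)` for `J = {j_1 < ... < j_s}`. -/
def muJ (n : ℕ) (Γ : List (ℕ × ℤ)) (lamVec : Fin n → ℤ) (J : Finset ℕ) : Fin n → ℤ :=
  (J.sort (· ≤ ·)).foldr (fun j v => affRefl n (Γ.getD j (0, 0)) ((lCount Γ j : ℕ) : ℤ) v) lamVec

/-- The linear action of a signed permutation (given by its window) on `ℤ^n`: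
`w(ε_i) = ε_{w(i)}` with `ε_{-i} = -ε_i`. -/
def wAct (n : ℕ) (w : List ℤ) (v : Fin n → ℤ) : Fin n → ℤ := fun r =>
  ∑ i : Fin n, ((if w.getD i 0 = ((r : ℕ) + 1 : ℤ) then v i else 0) +
    (if w.getD i 0 = -(((r : ℕ) + 1 : ℤ)) then -(v i) else 0))

def lamVec (n : ℕ) (lam : Fin n → ℕ) : Fin n → ℤ := fun i => (lam i : ℤ)

/-! ### Fillings of the doubled shape `\hat λ` -/

/-- A filling of the doubled shape, recorded by its primed columns `C'_{i,k}`
(`Cp i k`) and unprimed columns `C_{i,j}` (`Cu i j`). -/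
structure Filling where
  Cp : ℕ → ℕ → List ℤ
  Cu : ℕ → ℕ → List ℤ

def validP (n : ℕ) (lam : Fin n → ℕ) (i k : ℕ) : Prop :=
  1 ≤ i ∧ i ≤ lamOne n lam ∧ 2 ≤ k ∧ k ≤ conj n lam i

def validU (n : ℕ) (lam : Fin n → ℕ) (i j : ℕ) : Prop :=
  1 ≤ i ∧ i ≤ lamOne n lam ∧ 1 ≤ j ∧ j ≤ conj n lam i ∧ (i = 1 → j = 1)

instance validP.dec (n : ℕ) (lam : Fin n → ℕ) (i k : ℕ) : Decidable (validP n lam i k) := by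
  unfold validP; infer_instance

instance validU.dec (n : ℕ) (lam : Fin n → ℕ) (i j : ℕ) : Decidable (validU n lam i j) := by
  unfold validU; infer_instance

/-- The right neighbour `C'_{i,k+1}` of `C'_{i,k}`, with the convention
`C'_{i,λ'_i+1} = C_{i,1}`. -/
def CpNxt (n : ℕ) (lam : Fin n → ℕ) (F : Filling) (i k : ℕ) : List ℤ :=
  if k < conj n lam i then F.Cp i (k + 1) else F.Cu i 1

/-- The right neighbour `C_{i,j+1}` of `C_{i,j}`, with the conventions
`C_{i,λ'_i+1} = C'_{i-1,2}` (if `λ'_{i-1} > 1`) and `C_{i,λ'_i+1} = C_{i-1,1}`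
(if `λ'_{i-1} = 1`). -/
def CuNxt (n : ℕ) (lam : Fin n → ℕ) (F : Filling) (i j : ℕ) : List ℤ :=
  if j < conj n lam i then F.Cu i (j + 1)
  else if 2 ≤ conj n lam (i - 1) then F.Cp (i - 1) 2 else F.Cu (i - 1) 1

/-- No two entries `a, b` of a column with `a = ±b`. -/
def colDistinct (c : List ℤ) : Prop :=
  ∀ p q : ℕ, p < q → q < c.length →
    c.getD p 0 ≠ c.getD q 0 ∧ c.getD p 0 ≠ -(c.getD q 0)

/-- `R = (r_1 < r_2 < ... < r_p)` with `1 ≤ r_t < j ≤ d`. -/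
def sortedR (R : List ℕ) (j d : ℕ) : Prop :=
  List.Chain' (· < ·) R ∧ (∀ r ∈ R, 1 ≤ r ∧ r < j) ∧ 1 ≤ j ∧ j ≤ d

/-- `D (r_1,-j) (r_2,-j) ⋯ (r_p,-j)`. -/
def cycleApply (D : List ℤ) (R : List ℕ) (j : ℕ) : List ℤ :=
  R.foldl (fun E r => applyRefl E (r, -(j : ℤ))) D

/-- The relation between `C_{i,j+1}[1,λ'_i] = E` and `C_{i,j} = D` in a filling:
`E` differs from `D' = D(r_1,-j)⋯(r_p,-j)` only in position `j`,
`E(j) ∉ {±D'(r) : r ≠ j}` and `E(j) ⪯ D'(j)`. -/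
def unprimedTrans (D E : List ℤ) (R : List ℕ) (j d : ℕ) : Prop :=
  (∀ r, 1 ≤ r → r ≤ d → r ≠ j →
    E.getD (r - 1) 0 = (cycleApply D R j).getD (r - 1) 0) ∧
  (∀ r, 1 ≤ r → r ≤ d → r ≠ j →
    E.getD (j - 1) 0 ≠ (cycleApply D R j).getD (r - 1) 0 ∧
    E.getD (j - 1) 0 ≠ -((cycleApply D R j).getD (r - 1) 0)) ∧
  sle (E.getD (j - 1) 0) ((cycleApply D R j).getD (j - 1) 0)

/-- The set `F(λ)` of fillings of the doubled shape `\hat λ`. -/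
def FSet (n : ℕ) (lam : Fin n → ℕ) : Set Filling :=
  {F |
    -- shape
    (∀ i k, (validP n lam i k → (F.Cp i k).length = conj n lam i) ∧
      (¬ validP n lam i k → F.Cp i k = [])) ∧
    (∀ i j, (validU n lam i j → (F.Cu i j).length = conj n lam i) ∧
      (¬ validU n lam i j → F.Cu i j = [])) ∧
    -- entries lie in `{±1, ..., ±n}`
    (∀ i k, validP n lam i k → ∀ a ∈ F.Cp i k, 1 ≤ a.natAbs ∧ a.natAbs ≤ n) ∧
    (∀ i j, validU n lam i j → ∀ a ∈ F.Cu i j, 1 ≤ a.natAbs ∧ a.natAbs ≤ n) ∧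
    -- (1) rows weakly decrease from left to right
    (∀ i k, validP n lam i k → ∀ r, 1 ≤ r → r ≤ conj n lam i →
      sle ((CpNxt n lam F i k).getD (r - 1) 0) ((F.Cp i k).getD (r - 1) 0)) ∧
    (∀ i j, 2 ≤ i → validU n lam i j → ∀ r, 1 ≤ r → r ≤ conj n lam i →
      sle ((CuNxt n lam F i j).getD (r - 1) 0) ((F.Cu i j).getD (r - 1) 0)) ∧
    -- (2) no column contains `a, b` with `a = ±b`
    (∀ i k, validP n lam i k → colDistinct (F.Cp i k)) ∧
    (∀ i j, validU n lam i j → colDistinct (F.Cu i j)) ∧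
    -- (3) primed transitions: `C'_{i,k+1} = C'_{i,k}(r_1,-k)⋯(r_p,-k)`
    (∀ i k, validP n lam i k → ∃ R : List ℕ, sortedR R k (conj n lam i) ∧
      CpNxt n lam F i k = cycleApply (F.Cp i k) R k) ∧
    -- (3) unprimed transitions
    (∀ i j, 2 ≤ i → validU n lam i j → ∃ R : List ℕ, sortedR R j (conj n lam i) ∧
      unprimedTrans (F.Cu i j) ((CuNxt n lam F i j).take (conj n lam i)) R j (conj n lam i))}

/-! ### The filling map `f` -/

/-- Offset in `Γ` of the beginning of block `Γ^i` (the blocks are listed for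
`i = λ_1` down to `1`). -/
def offsetBlock (n : ℕ) (lam : Fin n → ℕ) (i : ℕ) : ℕ :=
  ∑ r ∈ Finset.Ico (i + 1) (lamOne n lam + 1), (gammaChain n (conj n lam r)).length

/-- Offset in `Γ` of the beginning of the factor `Γ'_{i,k}`.-/
def offsetP (n : ℕ) (lam : Fin n → ℕ) (i k : ℕ) : ℕ :=
  offsetBlock n lam i + ∑ j ∈ Finset.Ico 2 k, (gammaPrime j).length

/-- Offset in `Γ` of the beginning of the factor `Γ_{i,j}`.-/
def offsetU (n : ℕ) (lam : Fin n → ℕ) (i j : ℕ) : ℕ :=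
  offsetBlock n lam i + (∑ k ∈ Finset.Ico 2 (conj n lam i + 1), (gammaPrime k).length)
    + ∑ j' ∈ Finset.Ico 1 j, (gammaJK n j' (conj n lam i)).length

/-- `π = w ⋅ (all selected reflections at positions < off)`. -/
def piW (n : ℕ) (lam : Fin n → ℕ) (w : List ℤ) (J : Finset ℕ) (off : ℕ) : List ℤ :=
  applyAll w (selChain (lambdaChain n lam) (J.filter (fun x => x < off)))

/-- The filling map `f`, sending an (admissible) pair `(w, J)` to a filling of
the doubled shape `\hat λ`. -/
def fMap (n : ℕ) (lam : Fin n → ℕ) (w : List ℤ) (J : Finset ℕ) : Filling where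
  Cp := fun i k => if validP n lam i k
    then (piW n lam w J (offsetP n lam i k)).take (conj n lam i) else []
  Cu := fun i j => if validU n lam i j
    then (piW n lam w J (offsetU n lam i j)).take (conj n lam i) else []

/-! ### Content of a filling -/

/-- The columns `\bar{C}^i = C'_{i,2} C_{i,1}` (left to right, `i = λ_1, ..., 1`)
of the compressed filling `\barσ` of shape `2λ`; by the conventions,
`C'_{i,2} = C_{i,1}` when `λ'_i = 1`. -/
def compCols (n : ℕ) (lam : Fin n → ℕ) (F : Filling) : List (List ℤ) :=
  ((List.range (lamOne n lam)).map (fun t =>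
    [(if 2 ≤ conj n lam (lamOne n lam - t) then F.Cp (lamOne n lam - t) 2
      else F.Cu (lamOne n lam - t) 1), F.Cu (lamOne n lam - t) 1])).flatten

/-- The content of a list of columns: the `i`-th coordinate is half the
difference between the numbers of occurrences of `i` and of `-i`. -/
def ctCols (n : ℕ) (cols : List (List ℤ)) : Fin n → ℚ := fun r =>
  ((cols.flatten.count (((r : ℕ) + 1 : ℕ) : ℤ) : ℚ) -
    (cols.flatten.count (-(((r : ℕ) + 1 : ℕ) : ℤ)) : ℚ)) / 2

/-- The content `ct(σ)` of a filling `σ` of `\hatλ`. -/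
def ctQ (n : ℕ) (lam : Fin n → ℕ) (F : Filling) : Fin n → ℚ :=
  ctCols n (compCols n lam F)

/-! ### The statistics `N(D,C)` and `des(D,C)` -/

/-- `σ_{ab} = 1` if `a` and `b` are both negative, else `0`. -/
def sigmaAB (a b : ℤ) : ℕ := if a < 0 ∧ b < 0 then 1 else 0

def allEntries (n : ℕ) : List ℤ :=
  (List.range n).map (fun r => ((r + 1 : ℕ) : ℤ)) ++
    (List.range n).map (fun r => -((r + 1 : ℕ) : ℤ))

/-- Case 1: `N(D, D(r,-j)) = N_{\bar b, a}(D[r+1,j-1]) +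
#{c : \bar b ≺ c ≺ a, c ∉ ±D[1,j]} + σ_{ab}` where `a = D(r)`, `b = D(j)`. -/
def N1 (n : ℕ) (D : List ℤ) (r j : ℕ) : ℕ :=
  Nab (-(D.getD (j - 1) 0)) (D.getD (r - 1) 0) (word D (r + 1) (j - 1)) +
  ((allEntries n).filter (fun c => decide (slt (-(D.getD (j - 1) 0)) c ∧
    slt c (D.getD (r - 1) 0) ∧ c ∉ D.take j ∧ c ∉ (D.take j).map (fun x => -x)))).length +
  sigmaAB (D.getD (r - 1) 0) (D.getD (j - 1) 0)

/-- Case 2: `N(D, D(r_1,-j)⋯(r_p,-j)) = ∑ N(D_{t-1}, D_t)`. -/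
def cycleN (n : ℕ) : List ℤ → List ℕ → ℕ → ℕ
  | _, [], _ => 0
  | D, r :: rs, j => N1 n D r j + cycleN n (applyRefl D (r, -(j : ℤ))) rs j

/-- The possible values `(N(D,C), des(D,C))` arising from the case-by-case
definition of the statistics (cases 0, 2, 3; case 1 is case 2 with `p = 1`).
If `C` is one box taller than `D`, `C` is replaced by `C[1,d]`. -/
def NdesCand (n : ℕ) (D C : List ℤ) : Set (ℕ × ℕ) :=
  {x |
    (C.take D.length = D ∧ x = (0, 0)) ∨
    (∃ j R, sortedR R j D.length ∧ R ≠ [] ∧ C.take D.length = cycleApply D R j ∧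
      x = (cycleN n D R j, R.length)) ∨
    (∃ j R, sortedR R j D.length ∧
      (∀ r, 1 ≤ r → r ≤ D.length → r ≠ j →
        (C.take D.length).getD (r - 1) 0 = (cycleApply D R j).getD (r - 1) 0) ∧
      (∀ r, 1 ≤ r → r ≤ D.length → r ≠ j →
        (C.take D.length).getD (j - 1) 0 ≠ (cycleApply D R j).getD (r - 1) 0 ∧
        (C.take D.length).getD (j - 1) 0 ≠ -((cycleApply D R j).getD (r - 1) 0)) ∧
      slt ((C.take D.length).getD (j - 1) 0) ((cycleApply D R j).getD (j - 1) 0) ∧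
      x = (cycleN n D R j +
        Nab ((C.take D.length).getD (j - 1) 0) ((cycleApply D R j).getD (j - 1) 0)
          (word D (j + 1) D.length), R.length + 1))}

noncomputable def Nstat (n : ℕ) (D C : List ℤ) : ℕ :=
  sInf {v | ∃ d, (v, d) ∈ NdesCand n D C}

noncomputable def desStat (n : ℕ) (D C : List ℤ) : ℕ :=
  sInf {d | ∃ v, (v, d) ∈ NdesCand n D C}

/-- All columns of a filling of `\hatλ`, listed from left to right. -/
def colList (n : ℕ) (lam : Fin n → ℕ) (F : Filling) : List (List ℤ) :=
  ((List.range (lamOne n lam)).map (fun t =>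
    ((List.range (conj n lam (lamOne n lam - t) - 1)).map
      (fun s => F.Cp (lamOne n lam - t) (s + 2))) ++
    (if lamOne n lam - t = 1 then [F.Cu 1 1]
     else (List.range (conj n lam (lamOne n lam - t))).map
      (fun s => F.Cu (lamOne n lam - t) (s + 1))))).flatten

/-- Sum of a binary statistic over adjacent pairs of a list. -/
def adjSumN (f : List ℤ → List ℤ → ℕ) : List (List ℤ) → ℕ
  | a :: b :: rest => f a b + adjSumN f (b :: rest)
  | _ => 0

/-- `N(σ) = ∑_{i=1}^{m-1} N(C_{i+1}, C_i) + ℓ₊(C_1)`. -/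
noncomputable def Nsigma (n : ℕ) (lam : Fin n → ℕ) (F : Filling) : ℕ :=
  adjSumN (Nstat n) (colList n lam F) + lplus ((colList n lam F).getLastD [])

/-- `des(σ) = ∑_{i=1}^{m-1} des(C_{i+1}, C_i)`. -/
noncomputable def desSigma (n : ℕ) (lam : Fin n → ℕ) (F : Filling) : ℕ :=
  adjSumN (desStat n) (colList n lam F)

/-! ### Statistics on fillings of the plain shape `λ` (for Proposition 2.2) -/

/-- The descent statistic of a filling of the Young diagram of `λ`, whose
columns are listed from left to right. -/
def desTau (cols : List (List ℤ)) : ℕ :=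
  adjSumN (fun L R => ((Finset.range L.length).filter
    (fun r => slt (R.getD r 0) (L.getD r 0))).card) cols

/-- The complementary inversion statistic `cinv = n(λ) - inv` of a filling of
the Young diagram of `λ` (columns listed from left to right, `C_k` being the
`k`-th column from the right). -/
def cinvTau (cols : List (List ℤ)) : ℕ :=
  ∑ q ∈ Finset.range cols.length,
    (((Finset.range (cols.getD q []).length) ×ˢ (Finset.range (cols.getD q []).length)).filter
      (fun pp => pp.1 < pp.2 ∧
        (((1 ≤ q ∧ pp.2 < (cols.getD (q - 1) []).length) ∧
            slt ((cols.getD q []).getD pp.2 0) ((cols.getD q []).getD pp.1 0) ∧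
            slt ((cols.getD q []).getD pp.1 0) ((cols.getD (q - 1) []).getD pp.2 0)) ∨
          (¬ (1 ≤ q ∧ pp.2 < (cols.getD (q - 1) []).length) ∧
            slt ((cols.getD q []).getD pp.2 0) ((cols.getD q []).getD pp.1 0))))).card

/-! ### Chains for the root systems `C_n` and `B_n` and the conditions (R1), (R2) -/

def isPosRootC (n : ℕ) (β : ℕ × ℤ) : Prop :=
  (1 ≤ β.1 ∧ (β.1 : ℤ) < β.2 ∧ β.2 ≤ (n : ℤ)) ∨
  (1 ≤ β.1 ∧ 0 < -β.2 ∧ (β.1 : ℤ) ≤ -β.2 ∧ -β.2 ≤ (n : ℤ))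

/-- Positive roots of `B_n` use the same symbols; `(i,-i)` encodes `ε_i`. -/
def isPosRootB (n : ℕ) (β : ℕ × ℤ) : Prop := isPosRootC n β

/-- The root of type `B_n` of a symbol: as in type `C` except `(i,-i) ↦ ε_i`. -/
def rootVecB (n : ℕ) (β : ℕ × ℤ) : Fin n → ℤ :=
  if β.2 = -(β.1 : ℤ) then (fun r => if ((r : ℕ) + 1 : ℤ) = (β.1 : ℤ) then 1 else 0)
  else rootVec n β

/-- The coroot of type `B_n`: `ε_i^∨ = 2ε_i`, long roots unchanged. -/
def corootVecB (n : ℕ) (β : ℕ × ℤ) : Fin n → ℤ :=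
  if β.2 = -(β.1 : ℤ) then (fun r => if ((r : ℕ) + 1 : ℤ) = (β.1 : ℤ) then 2 else 0)
  else rootVec n β

/-- `ω_k` in type `C_n`. -/
def omegaC (n k : ℕ) : Fin n → ℤ := fun r => if (r : ℕ) + 1 ≤ k then 1 else 0

/-- `ω_k` in type `B_n` (`ω_n` is half the sum of the `ε_i`). -/
def omegaB (n k : ℕ) : Fin n → ℚ :=
  if k = n then (fun _ => 1/2) else (fun r => if (r : ℕ) + 1 ≤ k then 1 else 0)

/-- type `B`: `Γ'_j = ((1,-j),...,(j-1,-j),(j))`. -/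
def gammaPrimeB (j : ℕ) : List (ℕ × ℤ) := gammaPrime j ++ [(j, -(j : ℤ))]

/-- type `B`: `Γ(k) = Γ'_1 ⋯ Γ'_k Γ_1(k) ⋯ Γ_k(k)` for `k < n`, and
`Γ(n) = Γ'_1 ⋯ Γ'_n`. -/
def gammaChainB (n k : ℕ) : List (ℕ × ℤ) :=
  ((List.range k).map (fun r => gammaPrimeB (r + 1))).flatten
    ++ (if k = n then [] else ((List.range k).map (fun r => gammaJK n (r + 1) k)).flatten)

/-- `(R2)`: the subsequence of all occurrences of `α, β, γ` is a concatenation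
of consecutive pairs `(γ, α)` or `(γ, β)`. -/
def altPairs (g a b : ℕ × ℤ) : List (ℕ × ℤ) → Prop
  | [] => True
  | [_] => False
  | x :: y :: rest => x = g ∧ (y = a ∨ y = b) ∧ altPairs g a b rest

/-! ### Real vector space versions (for hyperplanes) -/

def ipR (n : ℕ) (u v : Fin n → ℝ) : ℝ := ∑ r, u r * v r

def affReflR (n : ℕ) (β : ℕ × ℤ) (c : ℝ) (v : Fin n → ℝ) : Fin n → ℝ :=
  fun r => v r - (ipR n v (fun s => ((corootVec n β s : ℤ) : ℝ)) - c) *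
    ((rootVec n β r : ℤ) : ℝ)

def wActR (n : ℕ) (w : List ℤ) (v : Fin n → ℝ) : Fin n → ℝ := fun r =>
  ∑ i : Fin n, ((if w.getD i 0 = ((r : ℕ) + 1 : ℤ) then v i else 0) +
    (if w.getD i 0 = -(((r : ℕ) + 1 : ℤ)) then -(v i) else 0))

/-- `γ^∨ = (2/⟨γ,γ⟩) γ`. -/
noncomputable def corootOfR (n : ℕ) (v : Fin n → ℝ) : Fin n → ℝ :=
  fun r => (2 / ipR n v v) * v r

/-- The part of the compressed filling of shape `2λ` consisting of the columns
numbered `2λ_1, 2λ_1 - 1, ..., q` (`\barσ[q]`); column `2i` is `C'_{i,2}` and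
column `2i-1` is `C_{i,1}`. -/
def compColsGe (n : ℕ) (lam : Fin n → ℕ) (F : Filling) (q : ℕ) : List (List ℤ) :=
  ((List.range (lamOne n lam)).map (fun t =>
    (if q ≤ 2 * (lamOne n lam - t) then
      [(if 2 ≤ conj n lam (lamOne n lam - t) then F.Cp (lamOne n lam - t) 2
        else F.Cu (lamOne n lam - t) 1)] else []) ++
    (if q ≤ 2 * (lamOne n lam - t) - 1 then [F.Cu (lamOne n lam - t) 1] else []))).flatten

/-! ### The chains `Δ` and `Φ` of Section 6 -/

/-- `Δ = ((1,p+1),...,(1,n),(1,-1),(1,-n),(1,-(n-1)),...,(1,-(p+1)))`. -/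
def deltaChain (n p : ℕ) : List (ℕ × ℤ) :=
  (List.range (n - p)).map (fun r => (1, ((p + 1 + r : ℕ) : ℤ)))
    ++ [(1, (-1 : ℤ))]
    ++ (List.range (n - p)).map (fun r => (1, -((n - r : ℕ) : ℤ)))

/-- The suffix `Δ_{\bar s}` of `Δ` beginning with `(1,-s)`. -/
def deltaSuffixNeg (p s : ℕ) : List (ℕ × ℤ) :=
  (List.range (s - p)).map (fun r => (1, -((s - r : ℕ) : ℤ)))

/-- The suffix `Δ_{\bar 1}` of `Δ` beginning with `(1,-1)`. -/
def deltaSuffixBar1 (n p : ℕ) : List (ℕ × ℤ) :=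
  [(1, (-1 : ℤ))] ++ (List.range (n - p)).map (fun r => (1, -((n - r : ℕ) : ℤ)))

/-- The suffix `Δ_s` of `Δ` beginning with `(1,s)` (for `p < s ≤ n`). -/
def deltaSuffixPos (n p s : ℕ) : List (ℕ × ℤ) :=
  (List.range (n + 1 - s)).map (fun r => (1, ((s + r : ℕ) : ℤ)))
    ++ [(1, (-1 : ℤ))]
    ++ (List.range (n - p)).map (fun r => (1, -((n - r : ℕ) : ℤ)))

/-- `Φ = ((1,-1),(1,-2),(2,-2),...,(1,-n),...,(n-1,-n),(n,-n))`. -/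
def phiChain (n : ℕ) : List (ℕ × ℤ) :=
  ((List.range n).map (fun jm =>
    (List.range (jm + 1)).map (fun im => (im + 1, -((jm + 1 : ℕ) : ℤ))))).flatten

/-- The suffix `Φ_{ij}` of `Φ` beginning with `(i,-j)`. -/
def phiSuffix (n i j : ℕ) : List (ℕ × ℤ) := (phiChain n).drop ((j - 1) * j / 2 + (i - 1))

/-- `ℓ^{ij}_-(w) = #{(k,l) : k ≤ l, (k,-l)` strictly precedes `(i,-j)` in `Φ`,
`w(k) ≻ -w(l)}`. -/
def lminusBefore (w : List ℤ) (i j : ℕ) : ℕ :=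
  (((Finset.range w.length) ×ˢ (Finset.range w.length)).filter
    (fun p => p.1 ≤ p.2 ∧ (p.2 + 1 < j ∨ (p.2 + 1 = j ∧ p.1 + 1 < i)) ∧
      slt (-(w.getD p.2 0)) (w.getD p.1 0))).card


/-! ### Lengths of integer sequences under a reflection -/

/-- The window reflection `(i, -j)` (0-based positions) on sequences: the entries in positions
`i` and `j` are exchanged and negated. For `i = j` this just negates position `i`. -/
def reflSeq (i j : ℕ) (x : ℕ → ℤ) (k : ℕ) : ℤ :=
  if k = i then -x j else if k = j then -x i else x k

/-- The indicator of `0 < z`. -/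
def sg (z : ℤ) : ℤ := if 0 < z then 1 else 0

/-- The contribution of the pair `(k, l)` to the length `ℓ₊ + ℓ₋` of a sequence `x`, where `≺` is
the usual order of `ℤ`. -/
def lenTerm (x : ℕ → ℤ) (k l : ℕ) : ℤ :=
  (if k < l then sg (x k - x l) else 0) + (if k ≤ l then sg (x k + x l) else 0)

/-- The contribution of the pair `(k, l)` to the number of `ℓ₋`-inversions whose reflection
comes strictly after `(i, -j)` in `Φ`. -/
def lateTerm (i j : ℕ) (x : ℕ → ℤ) (k l : ℕ) : ℤ :=
  if k ≤ l ∧ (j < l ∨ (j ≤ l ∧ i < k)) then sg (x k + x l) else 0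

lemma sg_mono {z z' : ℤ} (h : z ≤ z') : sg z ≤ sg z' := by
  unfold sg
  split_ifs <;> omega

/-- For entries `a ≠ ± c`, all indicators comparing `±a` with `±c` are expressed through two of
them. -/
lemma sg_pair {a c : ℤ} (h1 : c ≠ a) (h2 : c ≠ -a) :
    sg (c - a) = 1 - sg (a - c) ∧ sg (c + a) = sg (a + c) ∧ sg (c - -a) = sg (a + c) ∧
      sg (c + -a) = 1 - sg (a - c) ∧ sg (-a - c) = 1 - sg (a + c) ∧
      sg (-a + c) = 1 - sg (a - c) := by
  unfold sg
  refine ⟨?_, ?_, ?_, ?_, ?_, ?_⟩ <;> split_ifs <;> omega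

lemma sg_double {a : ℤ} (h : a ≠ 0) : sg (-a + -a) = 1 - sg (a + a) := by
  unfold sg
  split_ifs <;> omega

lemma sg_of_pos {z : ℤ} (h : 0 < z) : sg z = 1 := if_pos h

lemma sg_of_neg {z : ℤ} (h : z < 0) : sg z = 0 := if_neg h.not_gt

/-- A double sum of terms that vanish away from the lines `k, l ∈ {i, j}`, for `i ≠ j`. -/
lemma sum_cross (n i j : ℕ) (hi : i < n) (hj : j < n) (hij : i ≠ j) (F : ℕ → ℕ → ℤ)
    (h0 : ∀ k l, k ≠ i → k ≠ j → l ≠ i → l ≠ j → F k l = 0) :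
    ∑ k ∈ Finset.range n, ∑ l ∈ Finset.range n, F k l =
      (∑ k ∈ ((Finset.range n).erase i).erase j, (F k i + F i k + F k j + F j k)) +
        (F i i + F i j + F j i + F j j) := by
  have hji : j ∈ (Finset.range n).erase i := by simp [hj, hij.symm]
  have hsplit : ∀ f : ℕ → ℤ, ∑ k ∈ Finset.range n, f k =
      f i + (f j + ∑ k ∈ ((Finset.range n).erase i).erase j, f k) := by
    intro f
    rw [Finset.add_sum_erase _ f hji, Finset.add_sum_erase _ f (Finset.mem_range.2 hi)]
  have hin : ∀ k ∈ ((Finset.range n).erase i).erase j,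
      ∑ l ∈ Finset.range n, F k l = F k i + F k j := by
    intro k hk
    simp only [Finset.mem_erase] at hk
    rw [hsplit, Finset.sum_eq_zero, add_zero]
    intro l hl
    simp only [Finset.mem_erase] at hl
    exact h0 k l hk.2.1 hk.1 hl.2.1 hl.1
  rw [hsplit (fun k => ∑ l ∈ Finset.range n, F k l), Finset.sum_congr rfl hin, hsplit (F i),
    hsplit (F j)]
  simp only [Finset.sum_add_distrib]
  ring

/-- The analogue of `sum_cross` for a single line `i`. -/
lemma sum_cross_diag (n i : ℕ) (hi : i < n) (F : ℕ → ℕ → ℤ)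
    (h0 : ∀ k l, k ≠ i → l ≠ i → F k l = 0) :
    ∑ k ∈ Finset.range n, ∑ l ∈ Finset.range n, F k l =
      (∑ k ∈ (Finset.range n).erase i, (F k i + F i k)) + F i i := by
  have hsplit : ∀ f : ℕ → ℤ, ∑ k ∈ Finset.range n, f k =
      f i + ∑ k ∈ (Finset.range n).erase i, f k := by
    intro f
    rw [Finset.add_sum_erase _ f (Finset.mem_range.2 hi)]
  have hin : ∀ k ∈ (Finset.range n).erase i, ∑ l ∈ Finset.range n, F k l = F k i := by
    intro k hk
    simp only [Finset.mem_erase] at hk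
    rw [hsplit, Finset.sum_eq_zero, add_zero]
    intro l hl
    simp only [Finset.mem_erase] at hl
    exact h0 k l hk.1 hl.1
  rw [hsplit (fun k => ∑ l ∈ Finset.range n, F k l), Finset.sum_congr rfl hin, hsplit (F i)]
  simp only [Finset.sum_add_distrib]
  ring

lemma reflSeq_left (i j : ℕ) (x : ℕ → ℤ) : reflSeq i j x i = -x j := by simp [reflSeq]

lemma reflSeq_right (i j : ℕ) (x : ℕ → ℤ) : reflSeq i j x j = -x i := by
  by_cases h : j = i <;> simp [reflSeq, h]

lemma reflSeq_of_ne (i j : ℕ) (x : ℕ → ℤ) (k : ℕ) (h1 : k ≠ i) (h2 : k ≠ j) :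
    reflSeq i j x k = x k := by simp [reflSeq, h1, h2]

lemma reflSeq_reflSeq (i j : ℕ) (x : ℕ → ℤ) : reflSeq i j (reflSeq i j x) = x := by
  funext k
  by_cases h1 : k = i
  · subst h1; rw [reflSeq_left, reflSeq_right, neg_neg]
  · by_cases h2 : k = j
    · subst h2; rw [reflSeq_right, reflSeq_left, neg_neg]
    · rw [reflSeq_of_ne _ _ _ _ h1 h2, reflSeq_of_ne _ _ _ _ h1 h2]

/-- The signed-permutation condition on a sequence: the first `n` entries are nonzero with
pairwise distinct absolute values. -/
def SignedInj (n : ℕ) (x : ℕ → ℤ) : Prop :=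
  (∀ k < n, x k ≠ 0) ∧ ∀ k < n, ∀ l < n, k ≠ l → x k ≠ x l ∧ x k ≠ -x l

/-- Undoing an inversion `x i + x j > 0` changes the early part of the length (`ℓ₊` and the
`ℓ₋`-inversions before `(i, -j)`) and the late part by the same amount, and the inversion itself
accounts for the remaining `1`. -/
lemma sum_len_sub_late (n i j : ℕ) (hij : i ≤ j) (hj : j < n) (x : ℕ → ℤ) (hx : SignedInj n x)
    (hpos : 0 < x i + x j) :
    ∑ k ∈ Finset.range n, ∑ l ∈ Finset.range n,
      ((lenTerm x k l - 2 * lateTerm i j x k l) -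
        (lenTerm (reflSeq i j x) k l - 2 * lateTerm i j (reflSeq i j x) k l)) = 1 := by
  have hl := reflSeq_left i j x
  have hr := reflSeq_right i j x
  have ho := reflSeq_of_ne i j x
  generalize hy : reflSeq i j x = y at hl hr ho ⊢
  rcases hij.eq_or_lt with rfl | hlt
  · rw [sum_cross_diag n i hj, Finset.sum_eq_zero]
    · have e1 := sg_double (hx.1 i hj)
      have e2 := sg_of_pos hpos
      unfold lenTerm lateTerm
      rw [hl]
      simp (disch := omega) only [if_pos, if_neg]
      linarith
    · intro k hk
      simp only [Finset.mem_erase, Finset.mem_range] at hk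
      have hne := hx.2 k hk.2 i hj hk.1
      obtain ⟨e1, e2, e3, e4, e5, e6⟩ := sg_pair hne.1 hne.2
      unfold lenTerm lateTerm
      rw [hl, ho k hk.1 hk.1]
      rcases lt_or_gt_of_ne hk.1 with h | h <;>
        simp (disch := omega) only [if_pos, if_neg] <;> linarith
    · intro k l hk hl'
      simp only [lenTerm, lateTerm, ho k hk hk, ho l hl' hl', sub_self]
  · have hin : i < n := by omega
    rw [sum_cross n i j hin hj hlt.ne, Finset.sum_eq_zero]
    · have e1 := sg_double (hx.1 i hin)
      have e2 := sg_double (hx.1 j hj)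
      have e3 := sg_of_pos hpos
      have e4 : sg (-x j + -x i) = 0 := sg_of_neg (by omega)
      have e5 : sg (-x j - -x i) = sg (x i - x j) := congrArg sg (by ring)
      unfold lenTerm lateTerm
      rw [hl, hr]
      simp (disch := omega) only [if_pos, if_neg]
      linarith
    · intro k hk
      simp only [Finset.mem_erase, Finset.mem_range] at hk
      have hni := hx.2 k hk.2.2 i hin hk.2.1
      have hnj := hx.2 k hk.2.2 j hj hk.1
      obtain ⟨e1, e2, e3, e4, e5, e6⟩ := sg_pair hni.1 hni.2
      obtain ⟨f1, f2, f3, f4, f5, f6⟩ := sg_pair hnj.1 hnj.2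
      unfold lenTerm lateTerm
      rw [hl, hr, ho k hk.2.1 hk.1]
      have hcases : k < i ∨ (i < k ∧ k < j) ∨ j < k := by omega
      rcases hcases with h | h | h <;>
        simp (disch := omega) only [if_pos, if_neg] <;> linarith
    · intro k l hk hk' hl1 hl2
      simp only [lenTerm, lateTerm, ho k hk hk', ho l hl1 hl2, sub_self]

/-- Undoing an inversion does not increase the late part of the length. -/
lemma sum_late_nonneg (n i j : ℕ) (hij : i ≤ j) (hj : j < n) (x : ℕ → ℤ)
    (hpos : 0 < x i + x j) :
    0 ≤ ∑ k ∈ Finset.range n, ∑ l ∈ Finset.range n,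
      (lateTerm i j x k l - lateTerm i j (reflSeq i j x) k l) := by
  have hl := reflSeq_left i j x
  have hr := reflSeq_right i j x
  have ho := reflSeq_of_ne i j x
  generalize hy : reflSeq i j x = y at hl hr ho ⊢
  rcases hij.eq_or_lt with rfl | hlt
  · rw [sum_cross_diag n i hj]
    · refine add_nonneg (Finset.sum_nonneg ?_) ?_
      · intro k hk
        simp only [Finset.mem_erase, Finset.mem_range] at hk
        have m : sg (-x i + x k) ≤ sg (x i + x k) := sg_mono (by omega)
        unfold lateTerm
        rw [hl, ho k hk.1 hk.1]
        rcases lt_or_gt_of_ne hk.1 with h | h <;>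
          simp (disch := omega) only [if_pos, if_neg] <;> linarith
      · unfold lateTerm
        simp (disch := omega) only [if_neg]
        norm_num
    · intro k l hk hl'
      simp only [lateTerm, ho k hk hk, ho l hl' hl', sub_self]
  · have hin : i < n := by omega
    rw [sum_cross n i j hin hj hlt.ne]
    · refine add_nonneg (Finset.sum_nonneg ?_) ?_
      · intro k hk
        simp only [Finset.mem_erase, Finset.mem_range] at hk
        have m1 : sg (x k + -x i) ≤ sg (x k + x j) := sg_mono (by omega)
        have m2 : sg (-x j + x k) ≤ sg (x i + x k) := sg_mono (by omega)
        have m3 : sg (-x i + x k) ≤ sg (x j + x k) := sg_mono (by omega)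
        unfold lateTerm
        rw [hl, hr, ho k hk.2.1 hk.1]
        have hcases : k < i ∨ (i < k ∧ k < j) ∨ j < k := by omega
        rcases hcases with h | h | h <;>
          simp (disch := omega) only [if_pos, if_neg] <;> linarith
      · have m : sg (-x i + -x i) ≤ sg (x j + x j) := sg_mono (by omega)
        unfold lateTerm
        rw [hl, hr]
        simp (disch := omega) only [if_pos, if_neg]
        linarith
    · intro k l hk hk' hl1 hl2
      simp only [lateTerm, ho k hk hk', ho l hl1 hl2, sub_self]

lemma SignedInj.reflSeq {n i j : ℕ} (hi : i < n) (hj : j < n) {x : ℕ → ℤ} (hx : SignedInj n x) :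
    SignedInj n (reflSeq i j x) := by
  obtain ⟨h0, h1⟩ := hx
  -- up to sign, the entries are permuted by the transposition of `i` and `j`
  have hswap : ∀ k, HL.reflSeq i j x k = x (Equiv.swap i j k) ∨
      HL.reflSeq i j x k = -x (Equiv.swap i j k) := by
    intro k
    by_cases hk : k = i
    · subst hk; right; rw [reflSeq_left, Equiv.swap_apply_left]
    · by_cases hk' : k = j
      · subst hk'; right; rw [reflSeq_right, Equiv.swap_apply_right]
      · left; rw [reflSeq_of_ne _ _ _ _ hk hk', Equiv.swap_apply_of_ne_of_ne hk hk']
  have hlt : ∀ k < n, Equiv.swap i j k < n := by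
    intro k hk
    rw [Equiv.swap_apply_def]
    split_ifs <;> assumption
  refine ⟨fun k hk => ?_, fun k hk l hl hkl => ?_⟩
  · have := h0 _ (hlt k hk)
    rcases hswap k with h | h <;> omega
  · have := h1 _ (hlt k hk) _ (hlt l hl) ((Equiv.swap i j).injective.ne hkl)
    rcases hswap k with h | h <;> rcases hswap l with g | g <;> omega

/-! ### From windows to integer sequences -/

/-- The order-preserving relabelling of `1 ≺ ⋯ ≺ n ≺ -n ≺ ⋯ ≺ -1` by
`-n < ⋯ < -1 < 1 < ⋯ < n`; it commutes with negation. -/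
def key (n : ℕ) (a : ℤ) : ℤ := if 0 < a then a - (n + 1) else a + (n + 1)

/-- The relabelled window as a sequence; positions are 0-based. -/
def keySeq (n : ℕ) (w : List ℤ) (k : ℕ) : ℤ := key n (w.getD k 0)

/-- `w` is the window of an element of `B_n`. -/
def Good (n : ℕ) (w : List ℤ) : Prop :=
  w.length = n ∧ (∀ k < n, -(n : ℤ) ≤ w.getD k 0 ∧ w.getD k 0 ≤ n) ∧
    SignedInj n (fun k => w.getD k 0)

lemma key_neg (n : ℕ) {a : ℤ} (h : a ≠ 0) : key n (-a) = -key n a := by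
  unfold key
  split_ifs <;> omega

lemma slt_iff_key {n : ℕ} {a b : ℤ} (hb : b ≠ 0) (ha1 : -(n : ℤ) ≤ a)
    (ha2 : a ≤ n) (hb1 : -(n : ℤ) ≤ b) (hb2 : b ≤ n) : slt a b ↔ key n a < key n b := by
  unfold key slt
  split_ifs <;> omega

lemma good_of_mem {n : ℕ} {w : List ℤ} (hw : w ∈ allWindows n) : Good n w := by
  simp only [allWindows, Finset.mem_image, Finset.mem_univ, true_and] at hw
  obtain ⟨⟨σ, s⟩, rfl⟩ := hw
  have hget : ∀ k (hk : k < n), ((List.finRange n).map (fun i =>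
      if s i then -(((σ i : ℕ) : ℤ) + 1) else ((σ i : ℕ) : ℤ) + 1)).getD k 0 =
      if s ⟨k, hk⟩ then -(((σ ⟨k, hk⟩ : ℕ) : ℤ) + 1) else ((σ ⟨k, hk⟩ : ℕ) : ℤ) + 1 := by
    intro k hk
    rw [List.getD_eq_getElem _ _ (by simpa using hk)]
    simp
  refine ⟨by simp, fun k hk => ?_, fun k hk => ?_, fun k hk l hl hkl => ?_⟩
  · have := (σ ⟨k, hk⟩).isLt
    rw [hget k hk]
    split_ifs <;> omega
  · have := (σ ⟨k, hk⟩).isLt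
    simp only [hget k hk]
    split_ifs <;> omega
  · have hne : (σ ⟨k, hk⟩ : ℕ) ≠ σ ⟨l, hl⟩ := by
      intro h
      have := σ.injective (Fin.ext h)
      simp at this
      exact hkl this
    simp only [hget k hk, hget l hl]
    split_ifs <;> omega

lemma length_applyRefl (w : List ℤ) (t : ℕ × ℤ) : (applyRefl w t).length = w.length := by
  unfold applyRefl
  split_ifs <;> simp

lemma applyRefl_getD {w : List ℤ} {i j : ℕ} (hi : i < w.length) (hj : j < w.length) :
    (fun k => (applyRefl w (i + 1, -((j + 1 : ℕ) : ℤ))).getD k 0) =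
      reflSeq i j (fun k => w.getD k 0) := by
  funext k
  have h1 : ¬ (0 : ℤ) < -((j + 1 : ℕ) : ℤ) := by omega
  have h2 : (- -((j + 1 : ℕ) : ℤ)).toNat = j + 1 := by omega
  simp only [applyRefl, if_neg h1, h2, Nat.add_sub_cancel, reflSeq]
  by_cases hij : i = j
  · subst hij
    by_cases hk : k = i
    · subst hk
      simp [List.getD_eq_getElem?_getD, hi]
    · have : ¬ i = k := fun h => hk h.symm
      simp [List.getD_eq_getElem?_getD, hk, this]
  · have hij' : ¬ j = i := fun h => hij h.symm
    have hne : ¬ i + 1 = j + 1 := by omega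
    rw [if_neg hne]
    by_cases hk : k = i
    · subst hk
      simp [List.getD_eq_getElem?_getD, hi, hij']
    · have hk' : ¬ i = k := fun h => hk h.symm
      by_cases hk2 : k = j
      · subst hk2
        simp [List.getD_eq_getElem?_getD, hj, hk]
      · have hk2' : ¬ j = k := fun h => hk2 h.symm
        simp [List.getD_eq_getElem?_getD, hk, hk', hk2, hk2']

lemma Good.applyRefl {n i j : ℕ} {w : List ℤ} (hw : Good n w) (hi : i < n) (hj : j < n) :
    Good n (applyRefl w (i + 1, -((j + 1 : ℕ) : ℤ))) := by
  obtain ⟨hlen, hb, hs⟩ := hw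
  have hget := applyRefl_getD (w := w) (hlen ▸ hi) (hlen ▸ hj)
  refine ⟨by rw [length_applyRefl, hlen], fun k hk => ?_, ?_⟩
  · have h1 := hb k hk
    have h2 := hb i hi
    have h3 := hb j hj
    rw [congrFun hget k]
    unfold reflSeq
    dsimp only
    split_ifs <;> omega
  · rw [hget]
    exact hs.reflSeq hi hj

lemma Good.keySeq_applyRefl {n i j : ℕ} {w : List ℤ} (hw : Good n w) (hi : i < n) (hj : j < n) :
    keySeq n (HL.applyRefl w (i + 1, -((j + 1 : ℕ) : ℤ))) = reflSeq i j (keySeq n w) := by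
  obtain ⟨hlen, hb, hs⟩ := hw
  have hget := applyRefl_getD (w := w) (hlen ▸ hi) (hlen ▸ hj)
  funext k
  have e1 := key_neg n (hs.1 i hi)
  have e2 := key_neg n (hs.1 j hj)
  simp only [keySeq, congrFun hget k, reflSeq]
  split_ifs
  · exact e2
  · exact e1
  · rfl

lemma Good.signedInj_keySeq {n : ℕ} {w : List ℤ} (hw : Good n w) : SignedInj n (keySeq n w) := by
  obtain ⟨hlen, hb, h0, h1⟩ := hw
  refine ⟨fun k hk => ?_, fun k hk l hl hkl => ?_⟩
  · have := hb k hk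
    have := h0 k hk
    simp only [keySeq, key] at *
    split_ifs <;> omega
  · have := hb k hk
    have := h0 k hk
    have := hb l hl
    have := h0 l hl
    have := h1 k hk l hl hkl
    simp only [keySeq, key] at *
    split_ifs <;> omega

lemma Good.slt_iff {n k l : ℕ} {w : List ℤ} (hw : Good n w) (hk : k < n) (hl : l < n) :
    slt (w.getD l 0) (w.getD k 0) ↔ 0 < keySeq n w k - keySeq n w l := by
  obtain ⟨-, hb, hs⟩ := hw
  have hk0 : w.getD k 0 ≠ 0 := hs.1 k hk
  rw [slt_iff_key hk0 (hb l hl).1 (hb l hl).2 (hb k hk).1 (hb k hk).2]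
  unfold keySeq
  omega

lemma Good.slt_neg_iff {n k l : ℕ} {w : List ℤ} (hw : Good n w) (hk : k < n) (hl : l < n) :
    slt (-(w.getD l 0)) (w.getD k 0) ↔ 0 < keySeq n w k + keySeq n w l := by
  obtain ⟨-, hb, hs⟩ := hw
  have h := hb l hl
  have hk0 : w.getD k 0 ≠ 0 := hs.1 k hk
  have hl0 : w.getD l 0 ≠ 0 := hs.1 l hl
  rw [slt_iff_key (n := n) hk0 (by omega) (by omega)
    (hb k hk).1 (hb k hk).2, key_neg n hl0]
  unfold keySeq
  omega

/-- The number of `ℓ₋`-inversions `(k, l)` of `w` whose reflection occurs in `Γ`. -/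
def hcount (Γ : List (ℕ × ℤ)) (w : List ℤ) : ℕ :=
  (((Finset.range w.length) ×ˢ (Finset.range w.length)).filter
    (fun p => p.1 ≤ p.2 ∧ (p.1 + 1, -((p.2 + 1 : ℕ) : ℤ)) ∈ Γ ∧
      slt (-(w.getD p.2 0)) (w.getD p.1 0))).card

lemma hcount_le_lminus (Γ : List (ℕ × ℤ)) (w : List ℤ) : hcount Γ w ≤ lminus w := by
  unfold hcount lminus
  refine Finset.card_le_card fun p hp => ?_
  simp only [Finset.mem_filter] at hp ⊢
  exact ⟨hp.1, hp.2.1, hp.2.2.2⟩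

lemma hcount_nil (w : List ℤ) : hcount [] w = 0 := by simp [hcount]

lemma Good.len_eq {n : ℕ} {w : List ℤ} (hw : Good n w) :
    (len w : ℤ) = ∑ k ∈ Finset.range n, ∑ l ∈ Finset.range n, lenTerm (keySeq n w) k l := by
  simp only [len, lplus, lminus, Finset.card_filter, Finset.sum_product, hw.1, lenTerm,
    Finset.sum_add_distrib]
  push_cast
  congr 1 <;>
  · refine Finset.sum_congr rfl fun k hk => Finset.sum_congr rfl fun l hl => ?_
    rw [Finset.mem_range] at hk hl
    simp only [hw.slt_iff hk hl, hw.slt_neg_iff hk hl, sg, ite_and]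

lemma Good.hcount_eq {n i j : ℕ} {Γ : List (ℕ × ℤ)} {w : List ℤ} (hw : Good n w)
    (hΓ : ∀ k l, k ≤ l → l < n →
      ((k + 1, -((l + 1 : ℕ) : ℤ)) ∈ Γ ↔ j < l ∨ (j ≤ l ∧ i < k))) :
    (hcount Γ w : ℤ) =
      ∑ k ∈ Finset.range n, ∑ l ∈ Finset.range n, lateTerm i j (keySeq n w) k l := by
  simp only [hcount, Finset.card_filter, Finset.sum_product, hw.1, lateTerm]
  push_cast
  refine Finset.sum_congr rfl fun k hk => Finset.sum_congr rfl fun l hl => ?_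
  rw [Finset.mem_range] at hk hl
  by_cases hkl : k ≤ l
  · have := hΓ k l hkl hl
    push_cast at this
    simp only [hw.slt_neg_iff hk hl, sg, this, hkl, true_and, ite_and]
  · simp [hkl]

/-- The effect of a length-decreasing reflection `(i, -j)` with `Γ` the part of `Φ` after it: the
length drops by one plus twice the drop of the number of `ℓ₋`-inversions recorded by `Γ`. -/
lemma Good.len_refl {n i j : ℕ} {Γ : List (ℕ × ℤ)} {w : List ℤ} (hw : Good n w) (hij : i ≤ j)
    (hj : j < n)
    (hΓ : ∀ k l, k ≤ l → l < n →
      ((k + 1, -((l + 1 : ℕ) : ℤ)) ∈ Γ ↔ j < l ∨ (j ≤ l ∧ i < k)))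
    (hpos : 0 < keySeq n w i + keySeq n w j) :
    ∃ d : ℕ, len w = len (HL.applyRefl w (i + 1, -((j + 1 : ℕ) : ℤ))) + 2 * d + 1 ∧
      hcount Γ w = hcount Γ (HL.applyRefl w (i + 1, -((j + 1 : ℕ) : ℤ))) + d := by
  have hi : i < n := by omega
  have hw' := hw.applyRefl hi hj
  have h1 := sum_len_sub_late n i j hij hj _ hw.signedInj_keySeq hpos
  have h2 := sum_late_nonneg n i j hij hj _ hpos
  rw [← hw.keySeq_applyRefl hi hj] at h1 h2
  simp only [Finset.sum_sub_distrib, ← Finset.mul_sum, ← hw.len_eq, ← hw'.len_eq,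
    ← hw.hcount_eq hΓ, ← hw'.hcount_eq hΓ] at h1 h2
  refine ⟨hcount Γ w - hcount Γ (HL.applyRefl w (i + 1, -((j + 1 : ℕ) : ℤ))), ?_, ?_⟩ <;> omega

/-- A reflection that removes no inversion does not decrease the length. -/
lemma Good.len_refl_not {n i j : ℕ} {Γ : List (ℕ × ℤ)} {w : List ℤ} (hw : Good n w) (hij : i ≤ j)
    (hj : j < n)
    (hΓ : ∀ k l, k ≤ l → l < n →
      ((k + 1, -((l + 1 : ℕ) : ℤ)) ∈ Γ ↔ j < l ∨ (j ≤ l ∧ i < k)))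
    (hpos : ¬ 0 < keySeq n w i + keySeq n w j) :
    ¬ len (HL.applyRefl w (i + 1, -((j + 1 : ℕ) : ℤ))) < len w := by
  have hi : i < n := by omega
  have hw' := hw.applyRefl hi hj
  have hx := hw.signedInj_keySeq
  have hk := hw.keySeq_applyRefl hi hj
  have hne : keySeq n w i ≠ -keySeq n w j := by
    by_cases h : i = j
    · subst h
      have := hx.1 i hi
      omega
    · exact (hx.2 i hi j hj h).2
  have h1 := sum_len_sub_late n i j hij hj _ hw'.signedInj_keySeq
    (by rw [hk, reflSeq_left, reflSeq_right]; omega)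
  have h2 := sum_late_nonneg n i j hij hj (keySeq n (HL.applyRefl w (i + 1, -((j + 1 : ℕ) : ℤ))))
    (by rw [hk, reflSeq_left, reflSeq_right]; omega)
  have hback : reflSeq i j (keySeq n (HL.applyRefl w (i + 1, -((j + 1 : ℕ) : ℤ)))) =
      keySeq n w := by rw [hk, reflSeq_reflSeq]
  rw [hback] at h1 h2
  simp only [Finset.sum_sub_distrib, ← Finset.mul_sum, ← hw.len_eq, ← hw'.len_eq,
    ← hw.hcount_eq hΓ, ← hw'.hcount_eq hΓ] at h1 h2
  omega

/-- Passing from `Γ` to `(i, -j) :: Γ` adds the pair `(i, j)` to the recorded pairs. -/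
lemma Good.hcount_cons {n i j : ℕ} {Γ : List (ℕ × ℤ)} {w : List ℤ} (hw : Good n w) (hij : i ≤ j)
    (hj : j < n) (hn : (i + 1, -((j + 1 : ℕ) : ℤ)) ∉ Γ) :
    hcount ((i + 1, -((j + 1 : ℕ) : ℤ)) :: Γ) w =
      hcount Γ w + if 0 < keySeq n w i + keySeq n w j then 1 else 0 := by
  have hi : i < n := by omega
  have key_iff := hw.slt_neg_iff hi hj
  split_ifs with h
  · unfold hcount
    rw [← Finset.card_insert_of_notMem (a := (i, j))]
    · congr 1
      ext ⟨k, l⟩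
      simp only [Finset.mem_filter, Finset.mem_insert, Finset.mem_product, Finset.mem_range,
        List.mem_cons, Prod.mk.injEq, hw.1]
      constructor
      · rintro ⟨h1, h2, h3 | h3, h4⟩
        · left; omega
        · right; exact ⟨h1, h2, h3, h4⟩
      · rintro (⟨rfl, rfl⟩ | ⟨h1, h2, h3, h4⟩)
        · exact ⟨⟨hi, hj⟩, hij, Or.inl ⟨rfl, rfl⟩, key_iff.2 h⟩
        · exact ⟨h1, h2, Or.inr h3, h4⟩
    · exact fun hm => hn (Finset.mem_filter.1 hm).2.2.1
  · unfold hcount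
    rw [add_zero]
    congr 1
    ext ⟨k, l⟩
    simp only [Finset.mem_filter, Finset.mem_product, Finset.mem_range,
      List.mem_cons, Prod.mk.injEq, hw.1]
    constructor
    · rintro ⟨h1, h2, h3 | h3, h4⟩
      · obtain rfl : k = i := by omega
        obtain rfl : l = j := by omega
        exact absurd (key_iff.1 h4) h
      · exact ⟨h1, h2, h3, h4⟩
    · rintro ⟨h1, h2, h3, h4⟩
      exact ⟨h1, h2, Or.inr h3, h4⟩

/-! ### The recursion for the sum over admissible subsequences -/

lemma selChain_image_succ (t : ℕ × ℤ) (Γ : List (ℕ × ℤ)) (J : Finset ℕ) :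
    selChain (t :: Γ) (J.image Nat.succ) = selChain Γ J := by
  have h : (J.image Nat.succ).sort (· ≤ ·) = (J.sort (· ≤ ·)).map Nat.succ := by
    have := Finset.map_sort (r := (· ≤ ·)) (r' := (· ≤ ·)) (⟨Nat.succ, Nat.succ_injective⟩ : ℕ ↪ ℕ)
      J (fun a _ b _ => by simp)
    rw [Finset.map_eq_image] at this
    exact this.symm
  unfold selChain
  rw [h, List.map_map]
  rfl

lemma selChain_insert_zero (t : ℕ × ℤ) (Γ : List (ℕ × ℤ)) (J : Finset ℕ) :
    selChain (t :: Γ) (insert 0 (J.image Nat.succ)) = t :: selChain Γ J := by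
  rw [← selChain_image_succ t Γ J]
  unfold selChain
  rw [Finset.sort_insert _ (by simp) (by simp)]
  simp

lemma selChain_length (Γ : List (ℕ × ℤ)) (J : Finset ℕ) : (selChain Γ J).length = J.card := by
  simp [selChain]

lemma length_add_len_le (T : List (ℕ × ℤ)) (w : List ℤ) (h : decChain w T = true) :
    T.length + len (applyAll w T) ≤ len w := by
  induction T generalizing w with
  | nil => simp [applyAll]
  | cons t T ih =>
    simp only [decChain, Bool.and_eq_true, decide_eq_true_eq] at h
    have := ih _ h.2
    simp only [applyAll, List.foldl_cons, List.length_cons] at this ⊢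
    omega

open Polynomial in
/-- The sum over all `w`-admissible subsequences of `Γ`. -/
noncomputable def admSum (Γ : List (ℕ × ℤ)) (w : List ℤ) : Polynomial ℤ :=
  ∑ J ∈ (Finset.range Γ.length).powerset,
    if decChain w (selChain Γ J) = true then
      (X : Polynomial ℤ) ^ ((len w + len (applyAll w (selChain Γ J)) - J.card) / 2) *
        (1 - X) ^ J.card else 0

lemma admSum_nil (w : List ℤ) : admSum [] w = Polynomial.X ^ len w := by
  have h : selChain [] ∅ = [] := by simp [selChain]
  simp only [admSum, List.length_nil, Finset.range_zero, Finset.powerset_empty,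
    Finset.sum_singleton, h, decChain, applyAll, List.foldl_nil, Finset.card_empty]
  rw [if_pos trivial, show (len w + len w - 0) / 2 = len w by omega]
  simp

/-- An admissible subsequence of `t :: Γ` either avoids `t` or starts with it. -/
lemma admSum_cons (t : ℕ × ℤ) (Γ : List (ℕ × ℤ)) (w : List ℤ) :
    admSum (t :: Γ) w = admSum Γ w +
      ∑ J ∈ (Finset.range Γ.length).powerset,
        if decChain w (t :: selChain Γ J) = true then
          (Polynomial.X : Polynomial ℤ) ^
              ((len w + len (applyAll (applyRefl w t) (selChain Γ J)) - (J.card + 1)) / 2) *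
            (1 - Polynomial.X) ^ (J.card + 1) else 0 := by
  have hr : Finset.range (t :: Γ).length =
      insert 0 ((Finset.range Γ.length).image Nat.succ) := by
    ext k
    cases k <;> simp
  have himg : Function.Injective (Finset.image Nat.succ) :=
    Finset.image_injective Nat.succ_injective
  have hc : ∀ J : Finset ℕ, (J.image Nat.succ).card = J.card := fun J =>
    Finset.card_image_of_injective _ Nat.succ_injective
  have hc0 : ∀ J : Finset ℕ, (insert 0 (J.image Nat.succ)).card = J.card + 1 := fun J => by
    rw [Finset.card_insert_of_notMem (by simp), hc]
  unfold admSum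
  rw [hr, Finset.sum_powerset_insert (by simp), Finset.powerset_image,
    Finset.sum_image himg.injOn, Finset.sum_image himg.injOn]
  simp only [selChain_image_succ, selChain_insert_zero, hc, hc0]
  rfl

lemma admSum_cons_of_not {t : ℕ × ℤ} {Γ : List (ℕ × ℤ)} {w : List ℤ}
    (h : ¬ len (applyRefl w t) < len w) : admSum (t :: Γ) w = admSum Γ w := by
  rw [admSum_cons, Finset.sum_eq_zero, add_zero]
  intro J _
  simp [decChain, h]

lemma admSum_cons_of_lt {t : ℕ × ℤ} {Γ : List (ℕ × ℤ)} {w : List ℤ} {d : ℕ}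
    (h : len w = len (applyRefl w t) + 2 * d + 1) :
    admSum (t :: Γ) w = admSum Γ w +
      Polynomial.X ^ d * (1 - Polynomial.X) * admSum Γ (applyRefl w t) := by
  rw [admSum_cons]
  congr 1
  unfold admSum
  rw [Finset.mul_sum]
  refine Finset.sum_congr rfl fun J _ => ?_
  have hlt : len (applyRefl w t) < len w := by omega
  simp only [decChain, hlt, decide_true, Bool.true_and]
  split_ifs with hd
  · have hle := length_add_len_le _ _ hd
    rw [selChain_length] at hle
    have he : (len w + len (applyAll (applyRefl w t) (selChain Γ J)) - (J.card + 1)) / 2 =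
        d + (len (applyRefl w t) + len (applyAll (applyRefl w t) (selChain Γ J)) -
          J.card) / 2 := by
      omega
    rw [he]
    ring
  · simp

/-! ### The order of `Φ` -/

lemma mem_phiChain {n : ℕ} {p : ℕ × ℤ} :
    p ∈ phiChain n ↔ ∃ i j, i ≤ j ∧ j < n ∧ p = (i + 1, -((j + 1 : ℕ) : ℤ)) := by
  simp only [phiChain, List.mem_flatten, List.mem_map, List.mem_range]
  constructor
  · rintro ⟨_, ⟨j, hj, rfl⟩, hp⟩
    simp only [List.mem_map, List.mem_range] at hp
    obtain ⟨i, hi, rfl⟩ := hp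
    exact ⟨i, j, by omega, hj, rfl⟩
  · rintro ⟨i, j, hij, hj, rfl⟩
    refine ⟨_, ⟨j, hj, rfl⟩, ?_⟩
    simp only [List.mem_map, List.mem_range]
    exact ⟨i, by omega, rfl⟩

lemma phiChain_pairwise (n : ℕ) :
    (phiChain n).Pairwise (fun p q => q.2 < p.2 ∨ (q.2 = p.2 ∧ p.1 < q.1)) := by
  unfold phiChain
  rw [List.pairwise_flatten]
  constructor
  · intro l hl
    simp only [List.mem_map, List.mem_range] at hl
    obtain ⟨j, -, rfl⟩ := hl
    rw [List.pairwise_map]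
    refine List.pairwise_lt_range.imp fun {a b} hab => ?_
    right
    exact ⟨rfl, by simpa using hab⟩
  · rw [List.pairwise_map]
    refine List.pairwise_lt_range.imp fun {a b} hab => ?_
    intro p hp q hq
    simp only [List.mem_map, List.mem_range] at hp hq
    obtain ⟨i, -, rfl⟩ := hp
    obtain ⟨i', -, rfl⟩ := hq
    left
    simp only
    omega

/-- If `(i, -j) :: Γ` is a suffix of `Φ`, then `Γ` consists of the reflections after `(i, -j)`. -/
lemma mem_suffix_iff {n i j : ℕ} {A Γ : List (ℕ × ℤ)}
    (h : phiChain n = A ++ (i + 1, -((j + 1 : ℕ) : ℤ)) :: Γ) (k l : ℕ) (hkl : k ≤ l)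
    (hl : l < n) :
    (k + 1, -((l + 1 : ℕ) : ℤ)) ∈ Γ ↔ j < l ∨ (j ≤ l ∧ i < k) := by
  have hp := phiChain_pairwise n
  rw [h, List.pairwise_append, List.pairwise_cons] at hp
  obtain ⟨-, ⟨h1, -⟩, h2⟩ := hp
  constructor
  · intro hm
    have := h1 _ hm
    simp only at this
    omega
  · intro hlt
    have hm : (k + 1, -((l + 1 : ℕ) : ℤ)) ∈ phiChain n := mem_phiChain.2 ⟨k, l, hkl, hl, rfl⟩
    rw [h, List.mem_append, List.mem_cons] at hm
    rcases hm with hm | hm | hm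
    · have := h2 _ hm _ List.mem_cons_self
      simp only at this
      omega
    · simp only [Prod.mk.injEq] at hm
      omega
    · exact hm

/-- The refined identity for suffixes `Γ` of `Φ`: the exponent is `ℓ₊` plus the number of
`ℓ₋`-inversions whose reflection does not belong to `Γ`. -/
lemma admSum_suffix (n : ℕ) (Γ A : List (ℕ × ℤ)) (h : phiChain n = A ++ Γ) (w : List ℤ)
    (hw : Good n w) : admSum Γ w = Polynomial.X ^ (len w - hcount Γ w) := by
  induction Γ generalizing A w with
  | nil => rw [admSum_nil, hcount_nil, Nat.sub_zero]
  | cons t Γ ih =>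
    have ih' := ih (A ++ [t]) (by simp [h])
    obtain ⟨i, j, hij, hj, rfl⟩ := mem_phiChain.1 (show t ∈ phiChain n by simp [h])
    have hΓ := mem_suffix_iff h
    have hn : (i + 1, -((j + 1 : ℕ) : ℤ)) ∉ Γ := fun hm => by
      have := (hΓ i j hij hj).1 hm
      omega
    have hw' := hw.applyRefl (by omega : i < n) hj
    have hcons := hw.hcount_cons hij hj hn
    have hle := hcount_le_lminus ((i + 1, -((j + 1 : ℕ) : ℤ)) :: Γ) w
    by_cases hpos : 0 < keySeq n w i + keySeq n w j
    · obtain ⟨d, h1, h2⟩ := hw.len_refl hij hj hΓ hpos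
      have hle' := hcount_le_lminus Γ (applyRefl w (i + 1, -((j + 1 : ℕ) : ℤ)))
      rw [if_pos hpos] at hcons
      rw [admSum_cons_of_lt h1, ih' w hw, ih' _ hw']
      have hlen' : lminus (applyRefl w (i + 1, -((j + 1 : ℕ) : ℤ))) ≤
          len (applyRefl w (i + 1, -((j + 1 : ℕ) : ℤ))) := Nat.le_add_left _ _
      have e1 : len w - hcount Γ w =
          len w - hcount ((i + 1, -((j + 1 : ℕ) : ℤ)) :: Γ) w + 1 := by
        omega
      have e2 : len w - hcount ((i + 1, -((j + 1 : ℕ) : ℤ)) :: Γ) w =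
          d + (len (applyRefl w (i + 1, -((j + 1 : ℕ) : ℤ))) -
            hcount Γ (applyRefl w (i + 1, -((j + 1 : ℕ) : ℤ)))) := by
        omega
      rw [e1, e2]
      ring
    · rw [if_neg hpos, add_zero] at hcons
      rw [admSum_cons_of_not (hw.len_refl_not hij hj hΓ hpos), ih' w hw, hcons]

lemma hcount_phiChain {n : ℕ} {w : List ℤ} (hw : Good n w) :
    hcount (phiChain n) w = lminus w := by
  unfold hcount lminus
  congr 1
  ext ⟨k, l⟩
  simp only [Finset.mem_filter, Finset.mem_product, Finset.mem_range, hw.1]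
  constructor
  · rintro ⟨h1, h2, -, h4⟩
    exact ⟨h1, h2, h4⟩
  · rintro ⟨h1, h2, h4⟩
    exact ⟨h1, h2, mem_phiChain.2 ⟨k, l, h2, h1.2, rfl⟩, h4⟩

/-- Proposition 6.4, second part: summing over all
`w`-admissible subsequences of `Φ` gives `t^{ℓ₊(w)}`. -/
theorem phi_sum_full (n : ℕ) (w : List ℤ) (hw : w ∈ allWindows n) :
    (∑ᶠ (J : Finset ℕ) (_ : J ⊆ Finset.range (phiChain n).length ∧
        decChain w (selChain (phiChain n) J) = true),
      (Polynomial.X : Polynomial ℤ) ^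
          ((len w + len (applyAll w (selChain (phiChain n) J)) - J.card) / 2) *
        (1 - Polynomial.X) ^ J.card)
      = (Polynomial.X : Polynomial ℤ) ^ lplus w := by
  have hgood := good_of_mem hw
  have h := admSum_suffix n (phiChain n) [] rfl w hgood
  rw [hcount_phiChain hgood, show len w - lminus w = lplus w from Nat.add_sub_cancel _ _] at h
  rw [← h, admSum, ← Finset.sum_filter]
  refine finsum_cond_eq_sum_of_cond_iff _ fun {J} _ => ?_
  rw [Finset.mem_filter, Finset.mem_powerset]
end HL
end

section
/- Let w be in B_n, 1 ≤ i ≤ n, a := w(i), and suppose l(w(i,-i)) > l(w). Then l(w(i,-i)) - l(w) - 1 = 2 N_{a,-a}(w[i,n]). -/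
/-!
Write the length as a sum over pairs of positions `k ≤ l` of a local contribution depending only on
`k`, `l`, `w(k)`, `w(l)`: for `k < l` it is `[w(l) ≺ w(k)] + [-w(l) ≺ w(k)]`, and on the diagonal it
is `[-w(k) ≺ w(k)]` (`pairLen`, `len_eq_sum`). The off-diagonal contribution is invariant under
`w(l) ↦ -w(l)`, so negating `a = w(i)` only affects the pairs `(i, l)` with `l ≥ i`
(`pairLen_neg_other`, `len_set_neg`).

If `a > 0`, the diagonal pair contributes `+1` to the change and a pair `(i, l)` with `l > i` and
`c = w(l) ≠ ±a` contributes `[a ≺ c ≺ -a] + [a ≺ -c ≺ -a] = 2 [a ≺ c ≺ -a]`, because negation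
reverses `≺` (`pairLen_neg_pos`). If `a < 0`, every contribution is nonpositive
(`pairLen_neg_nonpos`), so the hypothesis that the length increases forces `a > 0`.
-/

open scoped BigOperators

namespace HL

/-- The contribution to the Coxeter length of the positions `k`, `l` carrying the entries `x`, `y`;
it vanishes for `k > l`. -/
def pairLen (k l : ℕ) (x y : ℤ) : ℤ :=
  (if k < l ∧ slt y x then 1 else 0) + (if k ≤ l ∧ slt (-y) x then 1 else 0)

lemma len_eq_sum (w : List ℤ) :
    (len w : ℤ) = ∑ k ∈ Finset.range w.length, ∑ l ∈ Finset.range w.length,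
      pairLen k l (w.getD k 0) (w.getD l 0) := by
  unfold len lplus lminus pairLen
  rw [Finset.card_filter, Finset.card_filter, Finset.sum_product, Finset.sum_product]
  push_cast
  simp only [Finset.sum_add_distrib]

/-- Changing the sign of the later entry of a pair exchanges its two inversion conditions. -/
lemma pairLen_neg_other {k l : ℕ} (h : k ≠ l) (x y : ℤ) :
    pairLen k l x (-y) = pairLen k l x y := by
  unfold pairLen
  have : k ≤ l ↔ k < l := by omega
  simp only [neg_neg, this]
  exact add_comm _ _

lemma pairLen_of_gt {k l : ℕ} (h : l < k) (x y : ℤ) : pairLen k l x y = 0 := by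
  unfold pairLen
  rw [if_neg (by omega), if_neg (by omega), add_zero]

lemma pairLen_neg_self {a : ℤ} (ha : 0 < a) (k : ℕ) :
    pairLen k k (-a) (-a) - pairLen k k a a = 1 := by
  have h1 : slt a (-a) := by unfold slt; omega
  have h2 : ¬ slt (-a) a := by unfold slt; omega
  simp [pairLen, h2, h1]

lemma pairLen_neg_pos {a c : ℤ} (ha : 0 < a) (hc : c ≠ 0) (h1 : c ≠ a) (h2 : c ≠ -a)
    {k l : ℕ} (h : k < l) :
    pairLen k l (-a) c - pairLen k l a c = 2 * if slt a c ∧ slt c (-a) then 1 else 0 := by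
  have e1 : slt c (-a) ↔ 0 < c ∨ c < -a := by unfold slt; omega
  have e2 : slt (-c) (-a) ↔ c < 0 ∨ a < c := by unfold slt; omega
  have e3 : slt c a ↔ 0 < c ∧ c < a := by unfold slt; omega
  have e4 : slt (-c) a ↔ c < 0 ∧ -c < a := by unfold slt; omega
  have e5 : slt a c ↔ c < 0 ∨ a < c := by unfold slt; omega
  simp only [pairLen, h, h.le, true_and, e1, e2, e3, e4, e5]
  split_ifs <;> omega

lemma pairLen_neg_nonpos {a : ℤ} (ha : a < 0) (c : ℤ) {k l : ℕ} :
    pairLen k l (-a) c ≤ pairLen k l a c := by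
  unfold pairLen slt
  split_ifs <;> omega

lemma pairLen_neg_self_nonpos {a : ℤ} (ha : a < 0) (k : ℕ) :
    pairLen k k (-a) (-a) ≤ pairLen k k a a := by
  unfold pairLen slt
  split_ifs <;> omega

lemma getD_set_neg (w : List ℤ) {p : ℕ} (hp : p < w.length) (k : ℕ) :
    (w.set p (-(w.getD p 0))).getD k 0 = if k = p then -(w.getD p 0) else w.getD k 0 := by
  rcases eq_or_ne k p with rfl | h
  · simp [List.getD_eq_getElem?_getD, hp]
  · simp [List.getD_eq_getElem?_getD, h, h.symm]

/-- Negating the entry in position `p` changes only the contributions of the pairs `(p, l)`. -/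
lemma len_set_neg (w : List ℤ) {p : ℕ} (hp : p < w.length) :
    (len (w.set p (-(w.getD p 0))) : ℤ) - len w =
      ∑ l ∈ Finset.range w.length,
        (pairLen p l (-(w.getD p 0)) (if l = p then -(w.getD p 0) else w.getD l 0)
          - pairLen p l (w.getD p 0) (w.getD l 0)) := by
  rw [len_eq_sum, len_eq_sum, List.length_set]
  simp only [getD_set_neg w hp]
  rw [← Finset.sum_sub_distrib, Finset.sum_eq_single_of_mem p (Finset.mem_range.2 hp)]
  · simp only [if_true, Finset.sum_sub_distrib]
  · intro k _ hk
    rw [← Finset.sum_sub_distrib]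
    refine Finset.sum_eq_zero fun l _ => ?_
    rw [if_neg hk]
    split_ifs with hl
    · subst hl
      rw [pairLen_neg_other hk, sub_self]
    · rw [sub_self]

lemma length_filter_drop (P : ℤ → Prop) [DecidablePred P] (w : List ℤ) (p : ℕ) :
    (((w.drop p).filter (fun c => decide (P c))).length : ℤ) =
      ∑ l ∈ Finset.range w.length, if p ≤ l ∧ P (w.getD l 0) then 1 else 0 := by
  induction w generalizing p with
  | nil => simp
  | cons x w ih =>
    rw [List.length_cons, Finset.sum_range_succ']
    cases p with
    | zero =>
      have := ih 0
      simp only [List.drop_zero, Nat.zero_le, true_and] at this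
      by_cases hx : P x <;> simp [hx, this]
    | succ p => simp [ih p]

/-- The window of a signed permutation has length `n`, nonzero entries, and entries of pairwise
distinct absolute values. -/
lemma window_props {n : ℕ} {w : List ℤ} (hw : w ∈ allWindows n) :
    w.length = n ∧ (∀ k < n, w.getD k 0 ≠ 0) ∧
      ∀ k < n, ∀ l < n, k ≠ l → w.getD k 0 ≠ w.getD l 0 ∧ w.getD k 0 ≠ -(w.getD l 0) := by
  obtain ⟨⟨σ, s⟩, -, rfl⟩ := Finset.mem_image.1 hw
  have key : ∀ k (hk : k < n), ((List.finRange n).map (fun i =>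
      if s i then -(((σ i : ℕ) : ℤ) + 1) else ((σ i : ℕ) : ℤ) + 1)).getD k 0 =
      if s ⟨k, hk⟩ then -(((σ ⟨k, hk⟩ : ℕ) : ℤ) + 1) else ((σ ⟨k, hk⟩ : ℕ) : ℤ) + 1 := by
    intro k hk
    simp [List.getD_eq_getElem?_getD, hk]
  refine ⟨by simp, fun k hk => ?_, fun k hk l hl hkl => ?_⟩
  · rw [key k hk]
    split_ifs <;> omega
  · rw [key k hk, key l hl]
    have : (σ ⟨k, hk⟩ : ℕ) ≠ σ ⟨l, hl⟩ := fun h => hkl (by simpa using σ.injective (Fin.ext h))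
    constructor <;> split_ifs <;> omega


/-- for `w ∈ B_n`, `a = w(i)`, if `ℓ(w(i,-i)) > ℓ(w)` then
`ℓ(w(i,-i)) - ℓ(w) - 1 = 2 N_{a,-a}(w[i,n])`. -/
theorem length_sign_change (n : ℕ) (w : List ℤ) (hw : w ∈ allWindows n)
    (i : ℕ) (h1 : 1 ≤ i) (h2 : i ≤ n)
    (hlen : len w < len (applyRefl w (i, -(i : ℤ)))) :
    (len (applyRefl w (i, -(i : ℤ))) : ℤ) - (len w : ℤ) - 1 =
      2 * (Nab (w.getD (i - 1) 0) (-(w.getD (i - 1) 0)) (word w i n) : ℤ) := by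
  obtain ⟨hL, hne, hdist⟩ := window_props hw
  obtain ⟨p, rfl⟩ : ∃ p, i = p + 1 := ⟨i - 1, by omega⟩
  have hp : p < w.length := by omega
  have happ : applyRefl w (p + 1, -((p + 1 : ℕ) : ℤ)) = w.set p (-(w.getD p 0)) := by
    unfold applyRefl
    rw [if_neg (by simp only; omega), if_pos (by simp only; omega)]
    rfl
  have hword : word w (p + 1) n = w.drop p := by
    unfold word
    rw [Nat.add_sub_cancel]
    exact List.take_of_length_le (by rw [List.length_drop]; omega)
  rw [happ] at hlen ⊢
  have hdiff := len_set_neg w hp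
  rw [Nat.add_sub_cancel, hword, Nab, length_filter_drop, hdiff]
  rcases lt_or_gt_of_ne (hne p (by omega)) with ha | ha
  · -- a negative entry contradicts the assumed increase of the length
    exfalso
    have : ∑ l ∈ Finset.range w.length,
        (pairLen p l (-(w.getD p 0)) (if l = p then -(w.getD p 0) else w.getD l 0)
          - pairLen p l (w.getD p 0) (w.getD l 0)) ≤ 0 := by
      refine Finset.sum_nonpos fun l _ => sub_nonpos.2 ?_
      split_ifs with hl
      · subst hl
        exact pairLen_neg_self_nonpos ha _
      · exact pairLen_neg_nonpos ha _
    omega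
  · have hterm : ∀ l ∈ Finset.range w.length,
        pairLen p l (-(w.getD p 0)) (if l = p then -(w.getD p 0) else w.getD l 0)
          - pairLen p l (w.getD p 0) (w.getD l 0) =
        (if l = p then 1 else 0) + 2 * (if p ≤ l ∧
          (slt (w.getD p 0) (w.getD l 0) ∧ slt (w.getD l 0) (-(w.getD p 0))) then 1 else 0) := by
      intro l hl
      rw [Finset.mem_range] at hl
      rcases lt_trichotomy l p with h | h | h
      · rw [pairLen_of_gt h, pairLen_of_gt h, if_neg h.ne, if_neg (by omega)]
        norm_num
      · subst h
        have : ¬ slt (w.getD l 0) (w.getD l 0) := by unfold slt; omega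
        rw [if_pos rfl, pairLen_neg_self ha, if_pos rfl, if_neg (fun h => this h.2.1)]
        norm_num
      · obtain ⟨hd1, hd2⟩ := hdist l (by omega) p (by omega) h.ne'
        rw [if_neg h.ne', pairLen_neg_pos ha (hne l (by omega)) hd1 hd2 h, if_neg h.ne', zero_add]
        simp only [h.le, true_and]
    rw [Finset.sum_congr rfl hterm, Finset.sum_add_distrib, ← Finset.mul_sum,
      Finset.sum_ite_eq', if_pos (Finset.mem_range.2 hp)]
    ring
end HL
end
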